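/- Let M ⊆ ℝ[x,y] be a finitely generated hermitian module, i.e., M = Σ_h + f_1·Σ_h + ⋯ + f_r·Σ_h for finitely many f_1, …, f_r ∈ ℝ[x,y]. If M satisfies (Sf) — every commuting tuple of complex square matrices T with ψ_T(p) positive semidefinite for all p ∈ M is normal — then the set X_M ⊆ ℂⁿ does not contain an analytic disc: there is no nonconstant holomorphic map φ from the open unit disc 𝔻 ⊆ ℂ to ℂⁿ with φ(𝔻) ⊆ X_M. -/

import Mathlib

open MvPolynomial Complex Matrix MeasureTheory ComplexOrder

noncomputable section

universe u

/-- `ℂ[z,z̄]`: the polynomial ring in the `2n` variables `z_j` (encoded `Sum.inl j`)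
and `z̄_j` (encoded `Sum.inr j`). -/
abbrev CPoly (n : ℕ) := MvPolynomial (Fin n ⊕ Fin n) ℂ

/-- The involution `f ↦ f*`: conjugate the coefficients and swap `z_j ↔ z̄_j`. -/
def hermStar (n : ℕ) : CPoly n →+* CPoly n :=
  (MvPolynomial.rename (Sum.swap : Fin n ⊕ Fin n → Fin n ⊕ Fin n)).toRingHom.comp
    (MvPolynomial.map (starRingEnd ℂ))

/-- The inclusion of the holomorphic polynomials `ℂ[z]` into `ℂ[z,z̄]`. -/
def hol (n : ℕ) : MvPolynomial (Fin n) ℂ →ₐ[ℂ] CPoly n :=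
  MvPolynomial.rename Sum.inl

/-- Evaluation `f(a,b)` (substituting `a` for `z` and `b` for `z̄`). -/
def evalPair {n : ℕ} (a b : Fin n → ℂ) (f : CPoly n) : ℂ :=
  MvPolynomial.eval (Sum.elim a b) f

/-- Evaluation `f(a) := f(a, ā)`. -/
def evalAt {n : ℕ} (a : Fin n → ℂ) (f : CPoly n) : ℂ :=
  evalPair a (fun j => (starRingEnd ℂ) (a j)) f

/-- `‖z‖² = |z_1|² + ⋯ + |z_n|²`. -/
def normZ (n : ℕ) : CPoly n := ∑ j : Fin n, X (Sum.inl j) * X (Sum.inr j)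

/-- `Σ_h`: hermitian sums of squares `∑ |p_i|²`, `p_i ∈ ℂ[z]` holomorphic. -/
def SigmaH (n : ℕ) : Set (CPoly n) :=
  {f | ∃ (k : ℕ) (p : Fin k → MvPolynomial (Fin n) ℂ),
    f = ∑ i, hol n (p i) * hermStar n (hol n (p i))}

/-- `Σ`: sums of squares `∑ |p_i|²`, `p_i ∈ ℂ[z,z̄]`. -/
def SigmaFull (n : ℕ) : Set (CPoly n) :=
  {f | ∃ (k : ℕ) (p : Fin k → CPoly n), f = ∑ i, p i * hermStar n (p i)}

/-- Ideals `I ⊆ ℝ[x,y]`, viewed as sets of `*`-fixed elements of `ℂ[z,z̄]`. -/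
def IsRealIdeal (n : ℕ) (I : Set (CPoly n)) : Prop :=
  (∀ f ∈ I, hermStar n f = f) ∧ (0 : CPoly n) ∈ I ∧
    (∀ f ∈ I, ∀ g ∈ I, f + g ∈ I) ∧
    ∀ f : CPoly n, hermStar n f = f → ∀ g ∈ I, f * g ∈ I

/-- The semiring `Σ_h + I`. -/
def SigmaHPlus (n : ℕ) (I : Set (CPoly n)) : Set (CPoly n) :=
  {f | ∃ s ∈ SigmaH n, ∃ g ∈ I, f = s + g}

/-- The real zero set `V_ℝ(I) ⊆ ℂⁿ`. -/
def VR (n : ℕ) (I : Set (CPoly n)) : Set (Fin n → ℂ) :=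
  {a | ∀ f ∈ I, evalAt a f = 0}

/-- A subset `M` of `ℝ[x,y]` is archimedean if for every real `f` there is `c ∈ ℝ`
with `c ± f ∈ M`. -/
def IsArchSet (n : ℕ) (M : Set (CPoly n)) : Prop :=
  ∀ f : CPoly n, hermStar n f = f →
    ∃ c : ℝ, (C (c : ℂ) + f) ∈ M ∧ (C (c : ℂ) - f) ∈ M

/-- Hermitian modules in `ℝ[x,y]`. -/
def IsHermitianModule (n : ℕ) (M : Set (CPoly n)) : Prop :=
  (∀ f ∈ M, hermStar n f = f) ∧ (1 : CPoly n) ∈ M ∧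
    (∀ f ∈ M, ∀ g ∈ M, f + g ∈ M) ∧
    ∀ s ∈ SigmaH n, ∀ f ∈ M, s * f ∈ M

/-- The closed set `X_M ⊆ ℂⁿ` associated with a hermitian module. -/
def XM (n : ℕ) (M : Set (CPoly n)) : Set (Fin n → ℂ) :=
  {a | ∀ g ∈ M, 0 ≤ (evalAt a g).re}

/-- Hereditary calculus `ψ_T` for a tuple of bounded operators:
`ψ_T(z^α z̄^β) = T^{*β} T^α` (adjoints to the left). -/
def psiOp {n : ℕ} {E : Type u} [NormedAddCommGroup E] [InnerProductSpace ℂ E]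
    [CompleteSpace E] (T : Fin n → E →L[ℂ] E) (f : CPoly n) : E →L[ℂ] E :=
  ∑ m ∈ f.support, f.coeff m •
    ((List.ofFn fun j => (ContinuousLinearMap.adjoint (T j)) ^ (m (Sum.inr j))).prod *
     (List.ofFn fun j => (T j) ^ (m (Sum.inl j))).prod)

/-- Hereditary calculus `ψ_T` for a tuple of matrices. -/
def psiMat {n m : ℕ} (T : Fin n → Matrix (Fin m) (Fin m) ℂ) (f : CPoly n) :
    Matrix (Fin m) (Fin m) ℂ :=
  ∑ mo ∈ f.support, f.coeff mo •
    ((List.ofFn fun j => ((T j)ᴴ) ^ (mo (Sum.inr j))).prod *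
     (List.ofFn fun j => (T j) ^ (mo (Sum.inl j))).prod)

/-- A commuting tuple `T` on a Hilbert space `E` is subnormal if it extends to a
commuting tuple of bounded normal operators on a larger Hilbert space `E'`,
leaving (the image of) `E` invariant. -/
def IsSubnormal {n : ℕ} {E : Type u} [NormedAddCommGroup E] [InnerProductSpace ℂ E]
    [CompleteSpace E] (T : Fin n → E →L[ℂ] E) : Prop :=
  ∃ (E' : Type u) (_ : NormedAddCommGroup E') (_ : InnerProductSpace ℂ E')
    (_ : CompleteSpace E') (ι : E →ₗᵢ[ℂ] E') (N : Fin n → E' →L[ℂ] E'),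
      (∀ i j, Commute (N i) (N j)) ∧
      (∀ j, Commute (N j) (ContinuousLinearMap.adjoint (N j))) ∧
      ∀ j x, N j (ι x) = ι (T j x)

/-- The "diamond" ideal `I(a,b)`. -/
def Iab {n : ℕ} (a b : Fin n → ℂ) : Set (CPoly n) :=
  {f | evalPair a (fun j => (starRingEnd ℂ) (a j)) f = 0 ∧
       evalPair a (fun j => (starRingEnd ℂ) (b j)) f = 0 ∧
       evalPair b (fun j => (starRingEnd ℂ) (a j)) f = 0 ∧
       evalPair b (fun j => (starRingEnd ℂ) (b j)) f = 0}

/-- The degenerate ideal `J(a,U)`. -/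
def Jau {n : ℕ} (a : Fin n → ℂ) (U : Matrix (Fin n) (Fin n) ℂ) : Set (CPoly n) :=
  {f | evalAt a f = 0 ∧
    U.mulVec (fun k => evalAt a (pderiv (Sum.inl k) f)) = 0 ∧
    (U.map (starRingEnd ℂ)).mulVec (fun k => evalAt a (pderiv (Sum.inr k) f)) = 0 ∧
    Matrix.trace
      (U * Matrix.of fun j k => evalAt a (pderiv (Sum.inr k) (pderiv (Sum.inl j) f))) = 0}

/-!
A jointly diagonalisable tuple `T` of `2 × 2` matrices is given by two joint eigenvalues
`a`, `b` and the Gram matrix `G` of the eigenvectors, and `ψ_T(f)` is congruent to the Hadamard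
product of `(f(a,ā), f(b,ā); f(a,b̄), f(b,b̄))` with `G`. By the Schur product theorem, `ψ_T` is
positive semidefinite on a whole hermitian module as soon as it is so on the generators. If the
eigenvectors are almost, but not exactly, orthogonal, this holds for a generator that is positive
at `a` and at `b`, and trivially for one that lies in the ideal `I(a,b)`. Such a tuple is normal
only if `a = b`.

On an analytic disc `φ` in `X_M`, at a generic point `w₀` every generator is either positive or
vanishes along `φ` near `w₀`. In the second case polarisation shows that it lies in
`I(φ(w₀), φ(v))` for all `v` near `w₀`. Hence `φ(v) = φ(w₀)` for all such `v`, and `φ` is constant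
by the identity theorem.
-/

/-- The hermitian module `Σ_h + f_1 Σ_h + ⋯ + f_r Σ_h` generated by a finite family `f`. -/
def hermitianModule {n : ℕ} {ι : Type*} [Fintype ι] (f : ι → CPoly n) : Set (CPoly n) :=
  {x | ∃ s₀ ∈ SigmaH n, ∃ s : ι → CPoly n, (∀ i, s i ∈ SigmaH n) ∧ x = s₀ + ∑ i, f i * s i}

lemma zero_mem_SigmaH (n : ℕ) : (0 : CPoly n) ∈ SigmaH n := ⟨0, Fin.elim0, by simp⟩

lemma one_mem_SigmaH (n : ℕ) : (1 : CPoly n) ∈ SigmaH n := ⟨1, fun _ => 1, by simp⟩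

lemma mem_hermitianModule {n : ℕ} {ι : Type*} [Fintype ι] (f : ι → CPoly n) (i : ι) :
    f i ∈ hermitianModule f := by
  classical
  refine ⟨0, zero_mem_SigmaH n, Pi.single i 1, fun j => ?_, by simp [Pi.single_apply]⟩
  obtain rfl | hj := eq_or_ne j i
  · simpa using one_mem_SigmaH n
  · simpa [hj] using zero_mem_SigmaH n

section Evaluation

variable {n : ℕ}

lemma evalPair_mul (a b : Fin n → ℂ) (f g : CPoly n) :
    evalPair a b (f * g) = evalPair a b f * evalPair a b g :=
  map_mul _ _ _

lemma evalPair_eq_sum (a b : Fin n → ℂ) (f : CPoly n) :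
    evalPair a b f = ∑ m ∈ f.support,
      f.coeff m * ((∏ j, a j ^ m (Sum.inl j)) * ∏ j, b j ^ m (Sum.inr j)) := by
  simp only [evalPair, eval_eq', Fintype.prod_sum_type, Sum.elim_inl, Sum.elim_inr]

lemma evalPair_hol (a b : Fin n → ℂ) (p : MvPolynomial (Fin n) ℂ) :
    evalPair a b (hol n p) = eval a p := by
  rw [evalPair, hol, eval_rename, Sum.elim_comp_inl]

lemma evalPair_star_hermStar (a b : Fin n → ℂ) (f : CPoly n) :
    evalPair a (star b) (hermStar n f) = star (evalPair b (star a) f) := by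
  have hswap : Sum.elim a (star b) ∘ Sum.swap = starRingEnd ℂ ∘ Sum.elim b (star a) := by
    ext (j | j) <;> simp
  change eval _ (rename Sum.swap (MvPolynomial.map (starRingEnd ℂ) f)) = starRingEnd ℂ (eval _ f)
  rw [eval_rename, hswap, map_eval]

lemma evalPair_star_comm {f : CPoly n} (hf : hermStar n f = f) (a b : Fin n → ℂ) :
    evalPair a (star b) f = star (evalPair b (star a) f) := by
  rw [← evalPair_star_hermStar, hf]

lemma ofReal_re_evalAt {f : CPoly n} (hf : hermStar n f = f) (a : Fin n → ℂ) :
    ((evalAt a f).re : ℂ) = evalAt a f :=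
  conj_eq_iff_re.1 (evalPair_star_comm hf a a).symm

end Evaluation

section EvalKernel

variable {n : ℕ} {κ : Type*} (x : κ → Fin n → ℂ)

/-- The matrix `(f(x_l, x̄_k))_{k,l}` of a polynomial at a family of points `x`. The row index is
conjugated, so that `Σ_h` is mapped to positive semidefinite matrices. -/
def evalKernel : CPoly n →+ Matrix κ κ ℂ where
  toFun f := Matrix.of fun k l => evalPair (x l) (star (x k)) f
  map_zero' := by ext; simp [evalPair]
  map_add' f g := by ext; simp [evalPair]

lemma evalKernel_apply (f : CPoly n) (k l : κ) :
    evalKernel x f k l = evalPair (x l) (star (x k)) f := rfl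

lemma evalKernel_mul (f g : CPoly n) :
    evalKernel x (f * g) = evalKernel x f ⊙ evalKernel x g := by
  ext k l
  exact evalPair_mul _ _ f g

lemma evalKernel_hol_mul_hermStar (p : MvPolynomial (Fin n) ℂ) :
    evalKernel x (hol n p * hermStar n (hol n p)) =
      vecMulVec (star fun k => eval (x k) p) fun k => eval (x k) p := by
  ext k l
  rw [evalKernel_apply, evalPair_mul, evalPair_star_hermStar, evalPair_hol, evalPair_hol,
    vecMulVec_apply, Pi.star_apply, mul_comm]

lemma isHermitian_evalKernel {f : CPoly n} (hf : hermStar n f = f) :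
    (evalKernel x f).IsHermitian := by
  ext k l
  exact (evalPair_star_comm hf _ _).symm

lemma posSemidef_evalKernel_of_mem_SigmaH [Finite κ] {s : CPoly n} (hs : s ∈ SigmaH n) :
    (evalKernel x s).PosSemidef := by
  obtain ⟨k, p, rfl⟩ := hs
  rw [map_sum]
  refine posSemidef_sum _ fun i _ => ?_
  rw [evalKernel_hol_mul_hermStar]
  exact posSemidef_vecMulVec_star_self _

/-- The Schur product theorem absorbs the multipliers `s ∈ Σ_h`. -/
lemma posSemidef_evalKernel_hadamard_of_mem_hermitianModule [Finite κ] {ι : Type*} [Fintype ι]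
    {f : ι → CPoly n} {G : Matrix κ κ ℂ} (hG : G.PosSemidef)
    (hf : ∀ i, (evalKernel x (f i) ⊙ G).PosSemidef) {g : CPoly n} (hg : g ∈ hermitianModule f) :
    (evalKernel x g ⊙ G).PosSemidef := by
  obtain ⟨s₀, hs₀, s, hs, rfl⟩ := hg
  have hsum : evalKernel x (s₀ + ∑ i, f i * s i) ⊙ G =
      evalKernel x s₀ ⊙ G + ∑ i, evalKernel x (s i) ⊙ (evalKernel x (f i) ⊙ G) := by
    ext k l
    simp only [map_add, map_sum, evalKernel_mul, hadamard_apply, Matrix.add_apply,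
      Matrix.sum_apply, add_mul, Finset.sum_mul]
    congr 1
    exact Finset.sum_congr rfl fun i _ => by ring
  rw [hsum]
  exact ((posSemidef_evalKernel_of_mem_SigmaH x hs₀).hadamard hG).add <|
    posSemidef_sum _ fun i _ => (posSemidef_evalKernel_of_mem_SigmaH x (hs i)).hadamard (hf i)

end EvalKernel

section HereditaryCalculus

lemma semiconjBy_prod_ofFn {M : Type*} [Monoid M] {n : ℕ} {a : M} {x y : Fin n → M}
    (h : ∀ j, SemiconjBy a (x j) (y j)) :
    SemiconjBy a (List.ofFn x).prod (List.ofFn y).prod := by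
  induction n with
  | zero => simp
  | succ n ih =>
    simp only [List.ofFn_succ, List.prod_cons]
    exact (h 0).mul_right (ih fun j => h j.succ)

lemma prod_ofFn_diagonal_pow {R κ : Type*} [CommSemiring R] [Fintype κ] [DecidableEq κ] {n : ℕ}
    (d : Fin n → κ → R) (e : Fin n → ℕ) :
    (List.ofFn fun j => diagonal (d j) ^ e j).prod = diagonal (∏ j, d j ^ e j) := by
  rw [← List.prod_ofFn, ← diagonalRingHom_apply, map_list_prod, List.map_ofFn]
  simp only [Function.comp_def, map_pow, diagonalRingHom_apply]

variable {n m : ℕ} {T : Fin n → Matrix (Fin m) (Fin m) ℂ} {P : Matrix (Fin m) (Fin m) ℂ}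
  {x : Fin m → Fin n → ℂ}

/-- The hypothesis says that the columns of `P` are joint eigenvectors of `T`, with joint
eigenvalues `x`. -/
lemma conjTranspose_mul_psiMat_mul (hT : ∀ j, SemiconjBy P (diagonal fun k => x k j) (T j))
    (f : CPoly n) : Pᴴ * psiMat T f * P = evalKernel x f ⊙ (Pᴴ * P) := by
  have hT' (j) : SemiconjBy Pᴴ (T j)ᴴ (diagonal fun k => star (x k j)) := by
    have hadjoint := congrArg conjTranspose (hT j).eq
    rw [conjTranspose_mul, conjTranspose_mul, diagonal_conjTranspose] at hadjoint
    exact hadjoint.symm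
  have hmonomial (e e' : Fin n → ℕ) :
      Pᴴ * ((List.ofFn fun j => (T j)ᴴ ^ e' j).prod * (List.ofFn fun j => T j ^ e j).prod) * P =
        diagonal (∏ j, (fun k => star (x k j)) ^ e' j) * (Pᴴ * P) *
          diagonal (∏ j, (fun k => x k j) ^ e j) := by
    have hleft := (semiconjBy_prod_ofFn fun j => (hT' j).pow_right (e' j)).eq
    have hright := (semiconjBy_prod_ofFn fun j => (hT j).pow_right (e j)).eq
    rw [prod_ofFn_diagonal_pow] at hleft hright
    rw [← Matrix.mul_assoc, hleft, Matrix.mul_assoc, Matrix.mul_assoc, ← hright]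
    simp only [Matrix.mul_assoc]
  ext k l
  simp only [psiMat, Matrix.mul_sum, Matrix.mul_smul, Matrix.smul_mul, hmonomial,
    Matrix.sum_apply, Matrix.smul_apply, mul_diagonal, diagonal_mul, hadamard_apply,
    evalKernel_apply, evalPair_eq_sum, Finset.sum_mul, Finset.prod_apply, Pi.pow_apply,
    Pi.star_apply, smul_eq_mul]
  exact Finset.sum_congr rfl fun _ _ => by ring

lemma posSemidef_psiMat_iff (hP : IsUnit P)
    (hT : ∀ j, SemiconjBy P (diagonal fun k => x k j) (T j)) (f : CPoly n) :
    (psiMat T f).PosSemidef ↔ (evalKernel x f ⊙ (Pᴴ * P)).PosSemidef := by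
  rw [← hP.posSemidef_star_left_conjugate_iff, star_eq_conjTranspose,
    conjTranspose_mul_psiMat_mul hT]

end HereditaryCalculus

section TwoByTwo

lemma posSemidef_fin_two_of_det_nonneg {𝕜 : Type*} [RCLike 𝕜] {A : Matrix (Fin 2) (Fin 2) 𝕜}
    (hA : A.IsHermitian) (h₀ : 0 < A 0 0) (hdet : 0 ≤ A.det) : A.PosSemidef := by
  have hne := h₀.ne'
  have h₀₀ : (starRingEnd 𝕜) (A 0 0) = A 0 0 := hA.apply 0 0
  have h₀₁ : (starRingEnd 𝕜) (A 0 1) = A 1 0 := hA.apply 1 0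
  have h₁₁ : A 1 0 * (A 0 1 / A 0 0) + A.det / A 0 0 = A 1 1 := by
    rw [det_fin_two]
    field_simp
    ring
  have hdiag : (diagonal ![A 0 0, A.det / A 0 0]).PosSemidef := by
    refine .diagonal fun i => ?_
    fin_cases i
    exacts [h₀.le, div_nonneg hdet h₀.le]
  have hLDL : A = !![1, A 0 1 / A 0 0; 0, 1]ᴴ * diagonal ![A 0 0, A.det / A 0 0] *
      !![1, A 0 1 / A 0 0; 0, 1] := by
    ext i j
    fin_cases i <;> fin_cases j
    · simp [Matrix.mul_apply]
    · simp [Matrix.mul_apply, mul_div_cancel₀, hne]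
    · simp [Matrix.mul_apply, h₀₀, h₀₁, hne]
    · simpa [Matrix.mul_apply, h₀₀, h₀₁, hne] using h₁₁.symm
  rw [hLDL]
  exact hdiag.conjTranspose_mul_mul_same _

lemma eventually_posSemidef_hadamard {A : Matrix (Fin 2) (Fin 2) ℂ} (hA : A.IsHermitian)
    (h₀ : 0 < A 0 0) (h₁ : 0 < A 1 1) :
    ∀ᶠ c : ℝ in nhds 0, (A ⊙ (!![1, (c : ℂ); 0, 1]ᴴ * !![1, (c : ℂ); 0, 1])).PosSemidef := by
  obtain ⟨p, hp, hp'⟩ := RCLike.pos_iff_exists_ofReal.1 h₀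
  obtain ⟨q, hq, hq'⟩ := RCLike.pos_iff_exists_ofReal.1 h₁
  have hgram (c : ℝ) : !![1, (c : ℂ); 0, 1]ᴴ * !![1, (c : ℂ); 0, 1] =
      !![1, (c : ℂ); (c : ℂ), c ^ 2 + 1] := by
    ext i j
    fin_cases i <;> fin_cases j <;> simp [Matrix.mul_apply, sq]
  have hdet (c : ℝ) : (A ⊙ !![1, (c : ℂ); (c : ℂ), c ^ 2 + 1]).det =
      (p * (q * (c ^ 2 + 1)) - c ^ 2 * normSq (A 0 1) : ℝ) := by
    have h₁₀ : A 1 0 = (starRingEnd ℂ) (A 0 1) := (hA.apply 1 0).symm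
    simp only [det_fin_two, hadamard_apply, of_apply, cons_val', cons_val_zero, cons_val_one,
      cons_val_fin_one, ← hp', ← hq', h₁₀, coe_algebraMap, ofReal_sub, ofReal_mul, ofReal_add,
      ofReal_pow, ofReal_one, normSq_eq_conj_mul_self]
    ring
  have hlim : Filter.Tendsto (fun c : ℝ => p * (q * (c ^ 2 + 1)) - c ^ 2 * normSq (A 0 1))
      (nhds 0) (nhds (p * q)) :=
    Continuous.tendsto' (by fun_prop) _ _ (by simp)
  filter_upwards [hlim.eventually_const_le (mul_pos hp hq)] with c hc
  refine posSemidef_fin_two_of_det_nonneg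
    (hA.hadamard (isHermitian_conjTranspose_mul_self _)) ?_ ?_
  · simpa [Matrix.mul_apply] using h₀
  · rw [hgram, hdet]
    exact zero_le_real.2 hc

lemma eq_zero_of_commute_conjTranspose {𝕜 : Type*} [RCLike 𝕜] {p q d : 𝕜}
    (h : Commute !![p, q; 0, d] !![p, q; 0, d]ᴴ) : q = 0 := by
  have h₀₀ := congrFun₂ h.eq 0 0
  simpa [Matrix.mul_apply, mul_comm p] using h₀₀

end TwoByTwo

section DiamondIdeal

variable {n : ℕ}

/-- The commuting tuple of `2 × 2` matrices with joint eigenvalue `a` at `(1, 0)` and joint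
eigenvalue `b` at `(c, 1)`. -/
def twoPointTuple (a b : Fin n → ℂ) (c : ℝ) (j : Fin n) : Matrix (Fin 2) (Fin 2) ℂ :=
  !![a j, c * (b j - a j); 0, b j]

lemma commute_twoPointTuple (a b : Fin n → ℂ) (c : ℝ) (i j : Fin n) :
    Commute (twoPointTuple a b c i) (twoPointTuple a b c j) := by
  simp only [twoPointTuple, commute_iff_eq, Matrix.mul_fin_two]
  ext k l
  fin_cases k <;> fin_cases l <;> dsimp <;> ring

lemma semiconjBy_twoPointTuple (a b : Fin n → ℂ) (c : ℝ) (j : Fin n) :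
    SemiconjBy !![1, (c : ℂ); 0, 1] (diagonal fun k => ![a, b] k j) (twoPointTuple a b c j) := by
  rw [SemiconjBy, twoPointTuple, diagonal_fin_two, Matrix.mul_fin_two, Matrix.mul_fin_two]
  simp [mul_sub, mul_comm]

lemma evalKernel_eq_zero_of_mem_Iab {a b : Fin n → ℂ} {f : CPoly n} (hf : f ∈ Iab a b) :
    evalKernel ![a, b] f = 0 := by
  obtain ⟨haa, hab, hba, hbb⟩ := hf
  ext k l
  fin_cases k <;> fin_cases l
  exacts [haa, hba, hab, hbb]

lemma eventually_posSemidef_evalKernel_hadamard {a b : Fin n → ℂ} {f : CPoly n}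
    (hf : hermStar n f = f)
    (hab : (0 < (evalAt a f).re ∧ 0 < (evalAt b f).re) ∨ f ∈ Iab a b) :
    ∀ᶠ c : ℝ in nhds 0, (evalKernel ![a, b] f ⊙
      (!![1, (c : ℂ); 0, 1]ᴴ * !![1, (c : ℂ); 0, 1])).PosSemidef := by
  obtain ⟨ha, hb⟩ | hzero := hab
  · have hpos {x : Fin n → ℂ} (hx : 0 < (evalAt x f).re) : 0 < evalAt x f := by
      rw [← ofReal_re_evalAt hf]
      exact zero_lt_real.2 hx
    exact eventually_posSemidef_hadamard (isHermitian_evalKernel _ hf) (hpos ha) (hpos hb)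
  · refine .of_forall fun c => ?_
    rw [evalKernel_eq_zero_of_mem_Iab hzero, zero_hadamard]
    exact .zero

theorem eq_of_forall_pos_or_mem_Iab {ι : Type*} [Fintype ι] {f : ι → CPoly n}
    (hf : ∀ i, hermStar n (f i) = f i)
    (hS : ∀ T : Fin n → Matrix (Fin 2) (Fin 2) ℂ, (∀ i j, Commute (T i) (T j)) →
      (∀ p ∈ hermitianModule f, (psiMat T p).PosSemidef) → ∀ j, Commute (T j) (T j)ᴴ)
    {a b : Fin n → ℂ}
    (hab : ∀ i, (0 < (evalAt a (f i)).re ∧ 0 < (evalAt b (f i)).re) ∨ f i ∈ Iab a b) :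
    a = b := by
  have hsmall : ∀ᶠ c : ℝ in nhdsWithin 0 {0}ᶜ, c ≠ 0 ∧ ∀ i, (evalKernel ![a, b] (f i) ⊙
      (!![1, (c : ℂ); 0, 1]ᴴ * !![1, (c : ℂ); 0, 1])).PosSemidef :=
    eventually_mem_nhdsWithin.and <| Filter.eventually_all.2 fun i =>
      (eventually_posSemidef_evalKernel_hadamard (hf i) (hab i)).filter_mono nhdsWithin_le_nhds
  obtain ⟨c, hc, hpsd⟩ := hsmall.exists
  have hunit : IsUnit !![1, (c : ℂ); 0, 1] := by
    simp [Matrix.isUnit_iff_isUnit_det, det_fin_two]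
  have hnormal := hS (twoPointTuple a b c) (commute_twoPointTuple a b c) fun p hp =>
    (posSemidef_psiMat_iff hunit (semiconjBy_twoPointTuple a b c) p).2 <|
      posSemidef_evalKernel_hadamard_of_mem_hermitianModule _
        (posSemidef_conjTranspose_mul_self _) hpsd hp
  ext j
  have hoffdiag : (c : ℂ) * (b j - a j) = 0 := eq_zero_of_commute_conjTranspose (hnormal j)
  exact (sub_eq_zero.1 ((mul_eq_zero.1 hoffdiag).resolve_left (ofReal_ne_zero.2 hc))).symm

end DiamondIdeal

section Polarization

open Topology Filter ComplexConjugate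

variable {E : Type*} [NormedAddCommGroup E] [NormedSpace ℂ E]

lemma eqOn_zero_ball_of_forall_ofReal [CompleteSpace E] {F : ℂ → E} {R : ℝ}
    (hF : DifferentiableOn ℂ F (Metric.ball 0 R))
    (h : ∀ t : ℝ, (t : ℂ) ∈ Metric.ball 0 R → F t = 0) : Set.EqOn F 0 (Metric.ball 0 R) := by
  obtain hR | hR := le_or_gt R 0
  · simp [Metric.ball_eq_empty.2 hR]
  have hofReal : Tendsto (fun t : ℝ => (t : ℂ)) (𝓝[≠] 0) (𝓝[≠] 0) :=
    continuous_ofReal.continuousWithinAt.tendsto_nhdsWithin fun t => by simp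
  have hball : ∀ᶠ t : ℝ in 𝓝[≠] 0, (t : ℂ) ∈ Metric.ball 0 R :=
    hofReal.eventually (nhdsWithin_le_nhds (Metric.ball_mem_nhds 0 hR))
  exact (hF.analyticOnNhd Metric.isOpen_ball).eqOn_zero_of_preconnected_of_frequently_eq_zero
    (convex_ball 0 R).isPreconnected (Metric.mem_ball_self hR)
    (hofReal.frequently (hball.mono h).frequently)

lemma eqOn_zero_ball_prod_of_forall_ofReal [CompleteSpace E] {F : ℂ × ℂ → E} {R : ℝ}
    (hF : DifferentiableOn ℂ F (Metric.ball 0 R))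
    (h : ∀ s t : ℝ, ((s : ℂ), (t : ℂ)) ∈ Metric.ball 0 R → F (s, t) = 0) :
    Set.EqOn F 0 (Metric.ball 0 R) := by
  have hball : Metric.ball (0 : ℂ × ℂ) R = Metric.ball 0 R ×ˢ Metric.ball 0 R :=
    (ball_prod_same 0 0 R).symm
  rw [hball] at hF h ⊢
  rintro ⟨x, y⟩ ⟨hx, hy⟩
  refine eqOn_zero_ball_of_forall_ofReal (F := fun y => F (x, y))
    (hF.comp (by fun_prop) fun y hy => ⟨hx, hy⟩) (fun t ht => ?_) hy
  exact eqOn_zero_ball_of_forall_ofReal (F := fun x => F (x, t))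
    (hF.comp (by fun_prop) fun x hx => ⟨hx, ht⟩) (fun s hs => h s t ⟨hs, ht⟩) hx

/-- In the coordinates `(w₀ + x + iy, conj w₀ + x - iy)` the set `{(w, conj w)}` consists of the
points where both `x` and `y` are real. -/
lemma eventually_eq_zero_of_eventually_conj [CompleteSpace E] {F : ℂ × ℂ → E} {w₀ : ℂ}
    (hF : AnalyticAt ℂ F (w₀, conj w₀)) (h : ∀ᶠ w in 𝓝 w₀, F (w, conj w) = 0) :
    ∀ᶠ p in 𝓝 (w₀, conj w₀), F p = 0 := by
  let Φ (q : ℂ × ℂ) : ℂ × ℂ := (w₀ + (q.1 + I * q.2), conj w₀ + (q.1 - I * q.2))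
  let Ψ (p : ℂ × ℂ) : ℂ × ℂ :=
    ((p.1 - w₀ + (p.2 - conj w₀)) / 2, (p.1 - w₀ - (p.2 - conj w₀)) / (2 * I))
  have hΦ₀ : Φ 0 = (w₀, conj w₀) := by simp [Φ]
  have hΨ₀ : Ψ (w₀, conj w₀) = 0 := by simp [Ψ]
  have hΦΨ (p) : Φ (Ψ p) = p := by
    ext <;> simp only [Φ, Ψ] <;> field_simp <;> ring
  have hΦ : Tendsto Φ (𝓝 0) (𝓝 (w₀, conj w₀)) := Continuous.tendsto' (by fun_prop) _ _ hΦ₀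
  have hΨ : Tendsto Ψ (𝓝 (w₀, conj w₀)) (𝓝 0) := Continuous.tendsto' (by fun_prop) _ _ hΨ₀
  have hreal : ∀ᶠ q in 𝓝 (0 : ℂ × ℂ), AnalyticAt ℂ F (Φ q) ∧
      ((Φ q).2 = conj (Φ q).1 → F (Φ q) = 0) := by
    have hfst : Tendsto Prod.fst (𝓝 (w₀, conj w₀)) (𝓝 w₀) := continuous_fst.tendsto _
    filter_upwards [hΦ.eventually hF.eventually_analyticAt, hΦ.eventually (hfst.eventually h)]
      with q hq hzero
    exact ⟨hq, fun hconj => by rwa [← hconj] at hzero⟩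
  obtain ⟨R, hR, hball⟩ := Metric.eventually_nhds_iff_ball.1 hreal
  have hzero : Set.EqOn (F ∘ Φ) 0 (Metric.ball 0 R) := by
    refine eqOn_zero_ball_prod_of_forall_ofReal (fun q hq => ?_) fun s t hst => ?_
    · exact ((hball q hq).1.differentiableAt.comp q (by fun_prop)).differentiableWithinAt
    · exact (hball _ hst).2 (by simp [Φ, sub_eq_add_neg])
  filter_upwards [hΨ.eventually (Metric.ball_mem_nhds 0 hR)] with p hp
  simpa [hΦΨ] using hzero hp

variable {n : ℕ}

lemma analyticAt_evalPair {g h : E → Fin n → ℂ} {x : E} (hg : AnalyticAt ℂ g x)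
    (hh : AnalyticAt ℂ h x) (f : CPoly n) : AnalyticAt ℂ (fun y => evalPair (g y) (h y) f) x := by
  have hcoord (j) : AnalyticAt ℂ (fun y => Sum.elim (g y) (h y) j) x := by
    rw [analyticAt_pi_iff] at hg hh
    cases j <;> simp [hg, hh]
  exact AnalyticAt.aeval_mvPolynomial hcoord f

lemma analyticAt_star_comp_conj {φ : ℂ → Fin n → ℂ} {w : ℂ} (hφ : AnalyticAt ℂ φ w) :
    AnalyticAt ℂ (fun v => star (φ (conj v))) (conj w) := by
  rw [analyticAt_pi_iff] at hφ ⊢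
  intro j
  have h := hφ j
  rw [Complex.analyticAt_iff_eventually_differentiableAt] at h ⊢
  have hconj : Tendsto (starRingEnd ℂ) (𝓝 (conj w)) (𝓝 w) := by
    simpa using continuous_conj.tendsto (conj w)
  filter_upwards [hconj.eventually h] with v hv
  have hv' := hv.conj_conj
  rwa [conj_conj] at hv'

lemma eventually_mem_Iab {φ : ℂ → Fin n → ℂ} {w₀ : ℂ} (hφ : AnalyticAt ℂ φ w₀) {f : CPoly n}
    (h : ∀ᶠ w in 𝓝 w₀, evalAt (φ w) f = 0) : ∀ᶠ v in 𝓝 w₀, f ∈ Iab (φ w₀) (φ v) := by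
  have hF : AnalyticAt ℂ
      (fun p : ℂ × ℂ => evalPair (φ p.1) (star (φ (conj p.2))) f) (w₀, conj w₀) :=
    analyticAt_evalPair (hφ.comp_of_eq analyticAt_fst rfl)
      ((analyticAt_star_comp_conj hφ).comp_of_eq analyticAt_snd rfl) f
  have hzero : ∀ᶠ p in 𝓝 (w₀, conj w₀), evalPair (φ p.1) (star (φ (conj p.2))) f = 0 :=
    eventually_eq_zero_of_eventually_conj hF <| by
      simpa only [conj_conj] using! h
  have hpull {γ : ℂ → ℂ × ℂ} (hγ : Continuous γ) (hγ₀ : γ w₀ = (w₀, conj w₀)) :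
      ∀ᶠ v in 𝓝 w₀, evalPair (φ (γ v).1) (star (φ (conj (γ v).2))) f = 0 :=
    (hγ.tendsto' w₀ _ hγ₀).eventually hzero
  filter_upwards [h, hpull (γ := fun v => (w₀, conj v)) (by fun_prop) rfl,
    hpull (γ := fun v => (v, conj w₀)) (by fun_prop) rfl] with v hv hwv hvw
  simp only [conj_conj] at hwv hvw
  exact ⟨h.self_of_nhds, hwv, hvw, hv⟩

end Polarization

section GenericPoint

open Topology Filter

lemma exists_mem_forall_mem_or_eventually_notMem {X ι : Type*} [TopologicalSpace X] [BaireSpace X]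
    [Countable ι] {S : ι → Set X} (hS : ∀ i, IsOpen (S i)) {U : Set X} (hU : IsOpen U)
    (hne : U.Nonempty) : ∃ x ∈ U, ∀ i, x ∈ S i ∨ ∀ᶠ y in 𝓝 x, y ∉ S i := by
  have hdense : Dense (⋂ i, (frontier (S i))ᶜ) :=
    dense_iInter_of_isOpen (fun i => isClosed_frontier.isOpen_compl) fun i =>
      interior_eq_empty_iff_dense_compl.1 <|
        frontier_compl (S i) ▸ interior_frontier (hS i).isClosed_compl
  obtain ⟨x, hxU, hx⟩ := hdense.inter_open_nonempty U hU hne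
  refine ⟨x, hxU, fun i => or_iff_not_imp_left.2 fun hxi => ?_⟩
  have hcl : x ∉ closure (S i) := fun hcl =>
    Set.mem_iInter.1 hx i ((hS i).frontier_eq ▸ ⟨hcl, hxi⟩)
  exact eventually_of_mem (isClosed_closure.isOpen_compl.mem_nhds hcl) fun y hy hyS =>
    hy (subset_closure hyS)

variable {n : ℕ}

lemma continuous_evalAt (f : CPoly n) : Continuous fun a : Fin n → ℂ => evalAt a f := by
  refine f.continuous_eval.comp (continuous_pi fun j => ?_)
  cases j <;> simp only [Sum.elim_inl, Sum.elim_inr] <;> fun_prop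

theorem exists_mem_forall_eventually_pos_or_mem_Iab {ι : Type*} [Countable ι] {f : ι → CPoly n}
    (hf : ∀ i, hermStar n (f i) = f i) {U : Set ℂ} (hU : IsOpen U) (hne : U.Nonempty)
    {φ : ℂ → Fin n → ℂ} (hφ : DifferentiableOn ℂ φ U)
    (hnonneg : ∀ w ∈ U, ∀ i, 0 ≤ (evalAt (φ w) (f i)).re) :
    ∃ w₀ ∈ U, ∀ i, ∀ᶠ v in 𝓝 w₀,
      (0 < (evalAt (φ w₀) (f i)).re ∧ 0 < (evalAt (φ v) (f i)).re) ∨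
        f i ∈ Iab (φ w₀) (φ v) := by
  have hcont (i) : ContinuousOn (fun w => (evalAt (φ w) (f i)).re) U :=
    (continuous_re.comp (continuous_evalAt (f i))).comp_continuousOn hφ.continuousOn
  obtain ⟨w₀, hw₀, hgen⟩ := exists_mem_forall_mem_or_eventually_notMem
    (fun i => (hcont i).isOpen_inter_preimage hU isOpen_Ioi) hU hne
  refine ⟨w₀, hw₀, fun i => ?_⟩
  have hmemU : ∀ᶠ w in 𝓝 w₀, w ∈ U := hU.mem_nhds hw₀
  obtain hpos | hnotpos := hgen i
  · filter_upwards [((hcont i).isOpen_inter_preimage hU isOpen_Ioi).mem_nhds hpos] with v hv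
    exact .inl ⟨hpos.2, hv.2⟩
  · have hzero : ∀ᶠ w in 𝓝 w₀, evalAt (φ w) (f i) = 0 := by
      filter_upwards [hmemU, hnotpos] with w hwU hw
      have hre : (evalAt (φ w) (f i)).re = 0 :=
        le_antisymm (not_lt.1 fun hlt => hw ⟨hwU, hlt⟩) (hnonneg w hwU i)
      rw [← ofReal_re_evalAt (hf i), hre, ofReal_zero]
    have hanalytic : AnalyticAt ℂ φ w₀ := hφ.analyticAt hmemU
    exact (eventually_mem_Iab hanalytic hzero).mono fun v hv => .inr hv

end GenericPoint

theorem statement19_general {n : ℕ} {ι : Type*} [Fintype ι] {f : ι → CPoly n}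
    (hf : ∀ i, hermStar n (f i) = f i)
    (hS : ∀ T : Fin n → Matrix (Fin 2) (Fin 2) ℂ, (∀ i j, Commute (T i) (T j)) →
      (∀ p ∈ hermitianModule f, (psiMat T p).PosSemidef) → ∀ j, Commute (T j) (T j)ᴴ)
    {U : Set ℂ} (hU : IsOpen U) (hUc : IsPreconnected U) {φ : ℂ → Fin n → ℂ}
    (hφ : DifferentiableOn ℂ φ U) (hX : ∀ w ∈ U, φ w ∈ XM n (hermitianModule f)) :
    ∀ w ∈ U, ∀ w' ∈ U, φ w = φ w' := by
  intro w hw w' hw'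
  obtain ⟨w₀, hw₀, hgen⟩ := exists_mem_forall_eventually_pos_or_mem_Iab hf hU ⟨w, hw⟩ hφ
    fun v hv i => hX v hv _ (mem_hermitianModule f i)
  have hlocal : φ =ᶠ[nhds w₀] fun _ => φ w₀ := (Filter.eventually_all.2 hgen).mono fun v hv =>
    (eq_of_forall_pos_or_mem_Iab hf hS hv).symm
  have hconst : Set.EqOn φ (fun _ => φ w₀) U :=
    (hφ.analyticOnNhd hU).eqOn_of_preconnected_of_eventuallyEq analyticOnNhd_const hUc hw₀ hlocal
  exact (hconst hw).trans (hconst hw').symm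

/-- Theorem `ausbau`: a finitely generated hermitian module
`M = Σ_h + f_1 Σ_h + ⋯ + f_r Σ_h` satisfying (Sf) has no analytic disc inside `X_M`. -/
theorem statement19 (n : ℕ) (hn : 0 < n) (r : ℕ) (fgen : Fin r → CPoly n)
    (hfr : ∀ i, hermStar n (fgen i) = fgen i) (M : Set (CPoly n))
    (hMdef : M = {x : CPoly n | ∃ s₀ ∈ SigmaH n, ∃ s : Fin r → CPoly n,
      (∀ i, s i ∈ SigmaH n) ∧ x = s₀ + ∑ i, fgen i * s i})
    (hSf : ∀ (m : ℕ) (T : Fin n → Matrix (Fin m) (Fin m) ℂ),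
      (∀ i j, Commute (T i) (T j)) →
      (∀ p ∈ M, (psiMat T p).PosSemidef) → ∀ j, Commute (T j) ((T j)ᴴ)) :
    ¬ ∃ φ : ℂ → (Fin n → ℂ), DifferentiableOn ℂ φ (Metric.ball (0 : ℂ) 1) ∧
      (∃ w ∈ Metric.ball (0 : ℂ) 1, ∃ w' ∈ Metric.ball (0 : ℂ) 1, φ w ≠ φ w') ∧
      ∀ w ∈ Metric.ball (0 : ℂ) 1, φ w ∈ XM n M := by
  rintro ⟨φ, hφ, ⟨w, hw, w', hw', hne⟩, hX⟩
  subst hMdef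
  exact hne <| statement19_general hfr (hSf 2) Metric.isOpen_ball
    (convex_ball 0 1).isPreconnected hφ hX w hw w' hw'

end
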